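/- Let S = {S_1,…,S_K} ⊂ ℂ^{d×d} satisfy the periodically switched stability condition: ρ(S_{i_1}⋯S_{i_n}) < 1 for every n ≥ 1 and every word (i_1,…,i_n) ∈ {1,…,K}^n. Let P = (p_{ij}) ∈ ℝ^{K×K} be an irreducible stochastic matrix with stationary distribution p having all entries positive, and let μ_{p,P} be the associated canonical (p,P)-Markov measure on Σ_K^+. If μ_{p,P} is extremal for S, then ρ(S) < 1. -/

import Mathlib

open Filter MeasureTheory Topology
open scoped ENNReal

noncomputable section

/-- The one-sided shift on `Σ_K^+ = ℕ → Fin K`. -/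
def shift (K : ℕ) : (ℕ → Fin K) → ℕ → Fin K := fun i n => i (n + 1)

/-- The ordered product `S_{w 0} ⋯ S_{w (n-1)}` along a finite word `w`. -/
def finWordProd {d K : ℕ} (S : Fin K → Matrix (Fin d) (Fin d) ℂ) {n : ℕ}
    (w : Fin n → Fin K) : Matrix (Fin d) (Fin d) ℂ :=
  (List.ofFn fun t => S (w t)).prod

/-- The ordered product of the first `n` matrices along an infinite sequence. -/
def wordProd {d K : ℕ} (S : Fin K → Matrix (Fin d) (Fin d) ℂ)
    (i : ℕ → Fin K) (n : ℕ) : Matrix (Fin d) (Fin d) ℂ :=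
  (List.ofFn fun t : Fin n => S (i t)).prod

/-- The (usual) spectral radius of a complex matrix, as a real number. -/
def specRad {d : ℕ} (A : Matrix (Fin d) (Fin d) ℂ) : ℝ :=
  (spectralRadius ℂ A).toReal

/-- The generalized spectral radius of a finite family of matrices. -/
def genSpecRad {d K : ℕ} (S : Fin K → Matrix (Fin d) (Fin d) ℂ) : ℝ :=
  Filter.atTop.limsup fun n : ℕ =>
    ⨆ w : Fin n → Fin K, specRad (finWordProd S w) ^ ((n : ℝ)⁻¹)

/-- A submultiplicative matrix norm on `d × d` complex matrices. -/
structure MatrixNorm (d : ℕ) where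
  N : Matrix (Fin d) (Fin d) ℂ → ℝ
  nonneg : ∀ A, 0 ≤ N A
  definite : ∀ A, N A = 0 ↔ A = 0
  homog : ∀ (c : ℂ) (A), N (c • A) = ‖c‖ * N A
  triangle : ∀ A B, N (A + B) ≤ N A + N B
  submult : ∀ A B, N (A * B) ≤ N A * N B

/-- `μ` is extremal for `S` (w.r.t. the matrix norm `N`). -/
def IsExtremal {d K : ℕ} (S : Fin K → Matrix (Fin d) (Fin d) ℂ)
    (N : Matrix (Fin d) (Fin d) ℂ → ℝ) (μ : Measure (ℕ → Fin K)) : Prop :=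
  ∀ᵐ i ∂μ, Tendsto (fun n : ℕ => N (wordProd S i n) ^ ((n : ℝ)⁻¹))
    atTop (𝓝 (genSpecRad S))

/-- `x` is a density point of `μ`. -/
def DensityPoint {K : ℕ} (μ : Measure (ℕ → Fin K)) (x : ℕ → Fin K) : Prop :=
  ∀ U : Set (ℕ → Fin K), IsOpen U → x ∈ U → 0 < μ U

/-- `S` has the spectral finiteness property. -/
def HasFinitenessProperty {d K : ℕ} (S : Fin K → Matrix (Fin d) (Fin d) ℂ) : Prop :=
  ∃ n : ℕ, 1 ≤ n ∧ ∃ w : Fin n → Fin K,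
    genSpecRad S = specRad (finWordProd S w) ^ ((n : ℝ)⁻¹)

/-- `x` is periodic of period `π ≥ 1`. -/
def IsPeriodic {K : ℕ} (x : ℕ → Fin K) (π : ℕ) : Prop :=
  1 ≤ π ∧ ∀ n, x (n + π) = x n

/-- The cylinder set determined by a finite word. -/
def cyl {K : ℕ} {n : ℕ} (w : Fin n → Fin K) : Set (ℕ → Fin K) :=
  {i | ∀ t : Fin n, i t = w t}

/-!
Periodic stability bounds the traces of all products. For an irreducible family, Burnside's
theorem says that the products span the full matrix algebra, so bounded traces give bounded
products, and every seminorm is dominated by one that no product increases. Now follow from each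
state a fixed successor of positive probability: the resulting word is eventually periodic, and
powers of its loop tend to zero, so along this path the seminorm is contracted. As the path has
positive probability and no other path expands, the expected seminorm contracts by a definite
factor in boundedly many steps. A general family is block triangular with irreducible diagonal
blocks, and contraction on average passes from the blocks to the whole.

Applied to right multiplication by the `S_k` on the space of matrices, this shows that the expected
norm of a Markov product decays geometrically. By Markov's inequality and Borel–Cantelli almost
every product decays exponentially, and extremality identifies its rate with `ρ(S)`.
-/

open Module
open scoped NNReal

section Words

variable {ι M : Type*} [Monoid M]

/-- The product of `T` along a word, the first letter standing rightmost: for endomorphisms, the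
first letter acts first. -/
def revProd (T : ι → M) (l : List ι) : M :=
  (l.map T).reverse.prod

@[simp]
theorem revProd_nil (T : ι → M) : revProd T [] = 1 := rfl

@[simp]
theorem revProd_cons (T : ι → M) (b : ι) (l : List ι) :
    revProd T (b :: l) = revProd T l * T b := by
  simp [revProd]

theorem revProd_append (T : ι → M) (l l' : List ι) :
    revProd T (l ++ l') = revProd T l' * revProd T l := by
  simp [revProd]

theorem exists_revProd_eq_of_mem_closure {T : ι → M} {x : M}
    (hx : x ∈ Submonoid.closure (Set.range T)) : ∃ l, revProd T l = x := by
  induction hx using Submonoid.closure_induction with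
  | mem _ h =>
    obtain ⟨b, rfl⟩ := h
    exact ⟨[b], by simp⟩
  | one => exact ⟨[], rfl⟩
  | mul _ _ _ _ h h' =>
    obtain ⟨l, rfl⟩ := h
    obtain ⟨l', rfl⟩ := h'
    exact ⟨l' ++ l, revProd_append T l' l⟩

end Words

section Semiconjugacy

variable {ι k V W : Type*} [Field k] [AddCommGroup V] [Module k V] [AddCommGroup W] [Module k W]
  {f : End k V} {g : End k W} {κ : V →ₗ[k] W}

theorem revProd_semiconj {T : ι → End k V} {T' : ι → End k W} (h : ∀ b, κ ∘ₗ T b = T' b ∘ₗ κ)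
    (l : List ι) : κ ∘ₗ revProd T l = revProd T' l ∘ₗ κ := by
  induction l with
  | nil => rfl
  | cons b l ih =>
    calc κ ∘ₗ revProd T (b :: l) = (κ ∘ₗ revProd T l) ∘ₗ T b := by
          rw [revProd_cons, End.mul_eq_comp, LinearMap.comp_assoc]
      _ = revProd T' l ∘ₗ κ ∘ₗ T b := by rw [ih, LinearMap.comp_assoc]
      _ = revProd T' (b :: l) ∘ₗ κ := by
          rw [h, revProd_cons, End.mul_eq_comp, LinearMap.comp_assoc]

theorem hasEigenvalue_of_injective_semiconj (h : κ ∘ₗ f = g ∘ₗ κ) (hκ : Function.Injective κ)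
    {z : k} (hz : f.HasEigenvalue z) : g.HasEigenvalue z := by
  obtain ⟨v, hv⟩ := hz.exists_hasEigenvector
  refine End.hasEigenvalue_of_hasEigenvector (x := κ v) ⟨End.mem_eigenspace_iff.2 ?_, ?_⟩
  · rw [← LinearMap.comp_apply, ← h, LinearMap.comp_apply, hv.apply_eq_smul, map_smul]
  · rw [Ne, map_eq_zero_iff κ hκ]
    exact hv.2

theorem hasEigenvalue_of_surjective_semiconj [FiniteDimensional k V] (h : κ ∘ₗ f = g ∘ₗ κ)
    (hκ : Function.Surjective κ) {z : k} (hz : g.HasEigenvalue z) : f.HasEigenvalue z := by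
  have : FiniteDimensional k W := .of_surjective κ hκ
  rw [End.hasEigenvalue_iff_mem_spectrum] at hz ⊢
  contrapose! hz
  rw [spectrum.notMem_iff, LinearMap.isUnit_iff_range_eq_top, LinearMap.range_eq_top] at hz ⊢
  have hcomm : κ ∘ₗ (algebraMap k (End k V) z - f) = (algebraMap k (End k W) z - g) ∘ₗ κ := by
    ext v
    simpa using LinearMap.congr_fun h v
  refine .of_comp (g := κ) ?_
  rw [← LinearMap.coe_comp, ← hcomm]
  exact hκ.comp hz

end Semiconjugacy

section PeriodicallyStable

variable {ι V V' : Type*} [AddCommGroup V] [Module ℂ V] [AddCommGroup V'] [Module ℂ V']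
  {T : ι → End ℂ V} {T' : ι → End ℂ V'} {κ : V →ₗ[ℂ] V'}

/-- The periodically switched stability condition for a family of endomorphisms: all nonempty
products have spectral radius less than one. -/
def PeriodicallyStable (T : ι → End ℂ V) : Prop :=
  ∀ l ≠ [], ∀ z, (revProd T l).HasEigenvalue z → ‖z‖ < 1

theorem PeriodicallyStable.of_injective (hT' : PeriodicallyStable T')
    (h : ∀ b, κ ∘ₗ T b = T' b ∘ₗ κ) (hκ : Function.Injective κ) : PeriodicallyStable T :=
  fun l hl z hz => hT' l hl z <| hasEigenvalue_of_injective_semiconj (revProd_semiconj h l) hκ hz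

theorem PeriodicallyStable.of_surjective [FiniteDimensional ℂ V] (hT : PeriodicallyStable T)
    (h : ∀ b, κ ∘ₗ T b = T' b ∘ₗ κ) (hκ : Function.Surjective κ) : PeriodicallyStable T' :=
  fun l hl z hz => hT l hl z <| hasEigenvalue_of_surjective_semiconj (revProd_semiconj h l) hκ hz

end PeriodicallyStable

section Burnside

variable {k V : Type*} [Field k] [AddCommGroup V] [Module k V]

theorem isSimpleModule_adjoin [Nontrivial V] {s : Set (End k V)}
    (h : ∀ W : Submodule k V, (∀ f ∈ s, W ≤ W.comap f) → W = ⊥ ∨ W = ⊤) :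
    IsSimpleModule (Algebra.adjoin k s) V where
  exists_pair_ne := ⟨⊥, ⊤, bot_ne_top⟩
  eq_bot_or_eq_top W := by
    simpa using h (W.restrictScalars k) fun f hf w hw =>
      W.smul_mem (⟨f, Algebra.subset_adjoin hf⟩ : Algebra.adjoin k s) hw

/-- **Burnside's theorem** on irreducible algebras of endomorphisms. -/
theorem subalgebra_end_eq_top_of_isSimpleModule [IsAlgClosed k] [FiniteDimensional k V]
    (A : Subalgebra k (End k V)) [IsSimpleModule A V] : A = ⊤ := by
  have hschur := (IsSimpleModule.algebraMap_end_bijective_of_isAlgClosed (A := A) (V := V) k).2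
  refine eq_top_iff.2 fun f _ => ?_
  let f' : End (End A V) V :=
    { toFun := f
      map_add' := f.map_add
      map_smul' := fun g v => by
        obtain ⟨c, rfl⟩ := hschur g
        simp }
  classical
  obtain ⟨r, hr⟩ := jacobson_density f' (Finset.univ.image (finBasis k V))
  have hfr : f = r.1 := (finBasis k V).ext fun i => hr _ (by simp)
  exact hfr ▸ r.2

end Burnside

section Trace

variable {ι V : Type*} [AddCommGroup V] [Module ℂ V] [FiniteDimensional ℂ V] {T : ι → End ℂ V}

theorem norm_trace_le {r : ℝ} {f : End ℂ V} (h : ∀ z, f.HasEigenvalue z → ‖z‖ ≤ r) :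
    ‖LinearMap.trace ℂ V f‖ ≤ finrank ℂ V * r := by
  have hsplits : f.charpoly.Splits := IsAlgClosed.splits _
  rw [End.trace_eq_sum_roots_charpoly_of_splits hsplits, ← f.charpoly_natDegree,
    hsplits.natDegree_eq_card_roots]
  refine (norm_multiset_sum_le _).trans ?_
  rw [← nsmul_eq_mul, ← Multiset.card_map norm]
  refine Multiset.sum_le_card_nsmul _ _ fun x hx => ?_
  obtain ⟨z, hz, rfl⟩ := Multiset.mem_map.1 hx
  exact h z ((End.hasEigenvalue_iff_isRoot_charpoly f z).2 (Polynomial.isRoot_of_mem_roots hz))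

theorem PeriodicallyStable.exists_norm_trace_le (hT : PeriodicallyStable T) :
    ∃ C, ∀ l, ‖LinearMap.trace ℂ V (revProd T l)‖ ≤ C := by
  refine ⟨finrank ℂ V, fun l => ?_⟩
  obtain rfl | hl := eq_or_ne l []
  · simp
  · simpa using norm_trace_le fun z hz => (hT l hl z hz).le

theorem PeriodicallyStable.exists_norm_trace_mul_le (hT : PeriodicallyStable T) {B : End ℂ V}
    (hB : B ∈ Algebra.adjoin ℂ (Set.range T)) :
    ∃ C, ∀ l, ‖LinearMap.trace ℂ V (revProd T l * B)‖ ≤ C := by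
  replace hB : B ∈ Submodule.span ℂ (Submonoid.closure (Set.range T) : Set (End ℂ V)) := by
    rwa [← Algebra.adjoin_eq_span]
  induction hB using Submodule.span_induction with
  | mem _ h =>
    obtain ⟨l', rfl⟩ := exists_revProd_eq_of_mem_closure h
    obtain ⟨C, hC⟩ := hT.exists_norm_trace_le
    exact ⟨C, fun l => revProd_append T l' l ▸ hC (l' ++ l)⟩
  | zero => exact ⟨0, by simp⟩
  | add A B _ _ hA hB =>
    obtain ⟨C, hC⟩ := hA
    obtain ⟨D, hD⟩ := hB
    refine ⟨C + D, fun l => ?_⟩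
    rw [mul_add, map_add]
    exact norm_add_le_of_le (hC l) (hD l)
  | smul c A _ hA =>
    obtain ⟨C, hC⟩ := hA
    refine ⟨‖c‖ * C, fun l => ?_⟩
    rw [mul_smul_comm, map_smul, norm_smul]
    exact mul_le_mul_of_nonneg_left (hC l) (norm_nonneg c)

theorem PeriodicallyStable.exists_norm_apply_le (hT : PeriodicallyStable T)
    [IsSimpleModule (Algebra.adjoin ℂ (Set.range T)) V] (φ : V →ₗ[ℂ] ℂ) (v : V) :
    ∃ C, ∀ l, ‖φ (revProd T l v)‖ ≤ C := by
  obtain ⟨C, hC⟩ := hT.exists_norm_trace_mul_le (B := φ.smulRight v)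
    (subalgebra_end_eq_top_of_isSimpleModule (Algebra.adjoin ℂ (Set.range T)) ▸ Algebra.mem_top)
  have hrank1 (l) : revProd T l * φ.smulRight v = φ.smulRight (revProd T l v) := by
    ext
    simp
  exact ⟨C, fun l => by simpa only [hrank1, LinearMap.trace_smulRight] using hC l⟩

end Trace

section NonexpansiveSeminorm

variable {ι 𝕜 V : Type*} [NormedField 𝕜] [AddCommGroup V] [Module 𝕜 V]

theorem seminorm_le_sum_basis {n : Type*} [Fintype n] (s : Seminorm 𝕜 V) (e : Basis n 𝕜 V)
    (v : V) : s v ≤ ∑ i, ‖e.coord i v‖ * s (e i) := by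
  conv_lhs => rw [← e.sum_repr v]
  refine (Finset.le_sum_of_subadditive s (map_zero s).le (map_add_le_add s) _ _).trans_eq ?_
  simp [map_smul_eq_mul]

theorem exists_nonexpansive_seminorm_of_bddAbove {T : ι → End 𝕜 V} {s : Seminorm 𝕜 V}
    (h : BddAbove (Set.range fun l => s.comp (revProd T l))) :
    ∃ q, s ≤ q ∧ ∀ b v, q (T b v) ≤ q v := by
  refine ⟨⨆ l, s.comp (revProd T l), le_ciSup h [], fun b v => ?_⟩
  rw [Seminorm.iSup_apply h, Seminorm.iSup_apply h]
  refine ciSup_le fun l => ?_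
  have hcons : s.comp (revProd T l) (T b v) = s.comp (revProd T (b :: l)) v := by
    simp [revProd_cons]
  exact hcons ▸ le_ciSup (Seminorm.bddAbove_range_iff.1 h v) (b :: l)

theorem exists_definite_seminorm_ge [FiniteDimensional 𝕜 V] (s : Seminorm 𝕜 V) :
    ∃ q : Seminorm 𝕜 V, s ≤ q ∧ ∀ v, q v = 0 → v = 0 := by
  let e := (finBasis 𝕜 V).equivFun
  refine ⟨s + (normSeminorm 𝕜 (Fin (finrank 𝕜 V) → 𝕜)).comp e.toLinearMap, fun v => ?_,
    fun v hv => ?_⟩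
  · exact le_add_of_nonneg_right (norm_nonneg (e v))
  · have hev : ‖e v‖ ≤ 0 := hv ▸ le_add_of_nonneg_left (apply_nonneg s v)
    exact e.map_eq_zero_iff.1 (norm_le_zero_iff.1 hev)

end NonexpansiveSeminorm

theorem PeriodicallyStable.exists_nonexpansive_seminorm {ι V : Type*} [AddCommGroup V]
    [Module ℂ V] [FiniteDimensional ℂ V] {T : ι → End ℂ V} (hT : PeriodicallyStable T)
    [IsSimpleModule (Algebra.adjoin ℂ (Set.range T)) V] (s : Seminorm ℂ V) :
    ∃ q, s ≤ q ∧ ∀ b v, q (T b v) ≤ q v := by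
  refine exists_nonexpansive_seminorm_of_bddAbove
    (Seminorm.bddAbove_range_iff.2 fun v => ?_)
  let e := finBasis ℂ V
  choose C hC using fun i => hT.exists_norm_apply_le (e.coord i) v
  refine ⟨∑ i, C i * s (e i), ?_⟩
  rintro _ ⟨l, rfl⟩
  refine (seminorm_le_sum_basis s e _).trans (Finset.sum_le_sum fun i _ => ?_)
  exact mul_le_mul_of_nonneg_right (hC i l) (apply_nonneg _ _)

section PowerContraction

theorem tendsto_pow_zero_of_spectralRadius_lt_one {A : Type*} [NormedRing A] [NormedAlgebra ℂ A]
    [CompleteSpace A] {a : A} (ha : spectralRadius ℂ a < 1) :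
    Tendsto (fun m : ℕ => a ^ m) atTop (𝓝 0) := by
  obtain ⟨r, har, hr⟩ := ENNReal.lt_iff_exists_nnreal_btwn.1 ha
  refine squeeze_zero_norm' ?_
    (tendsto_pow_atTop_nhds_zero_of_lt_one r.2 (ENNReal.coe_lt_one_iff.1 hr))
  have hgelfand := spectrum.pow_nnnorm_pow_one_div_tendsto_nhds_spectralRadius a
  filter_upwards [hgelfand.eventually_lt_const har, eventually_gt_atTop 0] with m hm hm0
  rw [one_div, ENNReal.rpow_inv_lt_iff (by exact_mod_cast hm0), ENNReal.rpow_natCast] at hm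
  exact_mod_cast hm.le

theorem tendsto_pow_zero_of_forall_hasEigenvalue {V : Type*} [NormedAddCommGroup V]
    [NormedSpace ℂ V] [FiniteDimensional ℂ V] [Nontrivial V] {f : End ℂ V}
    (hf : ∀ z, f.HasEigenvalue z → ‖z‖ < 1) :
    Tendsto (fun m : ℕ => End.toContinuousLinearMap V f ^ m) atTop (𝓝 0) := by
  have := FiniteDimensional.complete ℂ (V →L[ℂ] V)
  have hsp := AlgEquiv.spectrum_eq (End.toContinuousLinearMap V) f
  refine tendsto_pow_zero_of_spectralRadius_lt_one
    (spectrum.spectralRadius_lt_of_forall_lt_of_nonempty (r := 1) ?_ fun z hz => ?_)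
  · obtain ⟨z, hz⟩ := End.exists_eigenvalue f
    exact ⟨z, hsp ▸ hz.mem_spectrum⟩
  · exact hf z (End.hasEigenvalue_iff_mem_spectrum.2 (hsp ▸ hz))

theorem exists_pow_seminorm_apply_le {V : Type*} [AddCommGroup V] [Module ℂ V]
    [FiniteDimensional ℂ V] {f : End ℂ V} (hf : ∀ z, f.HasEigenvalue z → ‖z‖ < 1)
    {q : Seminorm ℂ V} (hq : ∀ v, q v = 0 → v = 0) {c : ℝ} (hc : 0 < c) :
    ∃ m : ℕ, ∀ v, q ((f ^ m) v) ≤ c * q v := by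
  cases subsingleton_or_nontrivial V with
  | inl _ => exact ⟨0, fun v => by simp [Subsingleton.elim v 0]⟩
  | inr _ =>
    let : Norm V := ⟨q⟩
    have core : NormedSpace.Core ℂ V :=
      ⟨⟨apply_nonneg q, map_smul_eq_mul q, map_add_le_add q⟩,
        fun v => ⟨hq v, fun hv => hv ▸ map_zero q⟩⟩
    let := NormedAddCommGroup.ofCore core
    let := NormedSpace.ofCore core
    obtain ⟨m, hm⟩ :=
      ((tendsto_pow_zero_of_forall_hasEigenvalue hf).norm.eventually_le_const
        (by simpa using hc)).exists
    refine ⟨m, fun v => ?_⟩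
    have := ContinuousLinearMap.le_of_opNorm_le _ hm v
    rwa [← map_pow] at this

end PowerContraction

section Orbits

variable {ι : Type*} {f : ι → ι} {a : ι}

theorem exists_isPeriodicPt_iterate [Finite ι] (f : ι → ι) (a : ι) :
    ∃ j, ∃ n ≠ 0, f.IsPeriodicPt n (f^[j] a) := by
  obtain ⟨i, j, hij, h⟩ := Finite.exists_ne_map_eq_of_infinite fun n => f^[n] a
  wlog hlt : i < j generalizing i j
  · exact this j i hij.symm h.symm (by lia)
  refine ⟨i, j - i, by lia, ?_⟩
  rw [Function.IsPeriodicPt, Function.IsFixedPt, ← Function.iterate_add_apply,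
    Nat.sub_add_cancel hlt.le]
  exact h.symm

theorem revProd_iterate_mul {M : Type*} [Monoid M] (T : ι → M) {n : ℕ} (h : f.IsPeriodicPt n a)
    (m : ℕ) : revProd T (List.iterate f a (n * m)) = revProd T (List.iterate f a n) ^ m := by
  induction m with
  | zero => simp
  | succ m ih =>
    rw [Nat.mul_succ, List.iterate_add, revProd_append, ih, (h.mul_const m).eq, pow_succ']

theorem seminorm_revProd_apply_le {𝕜 V : Type*} [NormedField 𝕜] [AddCommGroup V] [Module 𝕜 V]
    {T : ι → End 𝕜 V} {q : Seminorm 𝕜 V} (hq : ∀ b v, q (T b v) ≤ q v) (l : List ι) (v : V) :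
    q (revProd T l v) ≤ q v := by
  induction l generalizing v with
  | nil => rfl
  | cons b l ih =>
    rw [revProd_cons]
    exact (ih _).trans (hq b v)

theorem PeriodicallyStable.eventually_seminorm_revProd_iterate_le [Finite ι] {V : Type*}
    [AddCommGroup V] [Module ℂ V] [FiniteDimensional ℂ V] {T : ι → End ℂ V}
    (hT : PeriodicallyStable T) {q : Seminorm ℂ V} (hdef : ∀ v, q v = 0 → v = 0)
    (hq : ∀ b v, q (T b v) ≤ q v) (f : ι → ι) (a : ι) {c : ℝ} (hc : 0 < c) :
    ∀ᶠ N in atTop, ∀ v, q (revProd T (List.iterate f a N) v) ≤ c * q v := by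
  obtain ⟨j, n, hn, hper⟩ := exists_isPeriodicPt_iterate f a
  have hloop : List.iterate f (f^[j] a) n ≠ [] := List.ne_nil_of_length_pos <| by
    simpa using hn.pos
  obtain ⟨m, hm⟩ := exists_pow_seminorm_apply_le (hT _ hloop) hdef hc
  filter_upwards [eventually_ge_atTop (j + n * m)] with N hN v
  obtain ⟨t, rfl⟩ := Nat.exists_eq_add_of_le hN
  rw [List.iterate_add, List.iterate_add, revProd_append, revProd_append,
    revProd_iterate_mul T hper]
  calc q (revProd T _ ((revProd T (List.iterate f (f^[j] a) n) ^ m)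
          (revProd T (List.iterate f a j) v)))
      ≤ q ((revProd T (List.iterate f (f^[j] a) n) ^ m) (revProd T (List.iterate f a j) v)) :=
        seminorm_revProd_apply_le hq _ _
    _ ≤ c * q (revProd T (List.iterate f a j) v) := hm _
    _ ≤ c * q v := by
        gcongr
        exact seminorm_revProd_apply_le hq _ _

end Orbits

section PathWeight

variable {ι : Type*} {P : Matrix ι ι ℝ≥0}

/-- The probability that the Markov chain with transition matrix `P`, started at `a`, runs next
through the states of a word. -/
def pathWeight (P : Matrix ι ι ℝ≥0) : ι → List ι → ℝ≥0
  | _, [] => 1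
  | a, b :: l => P a b * pathWeight P b l

theorem pathWeight_iterate_pos {f : ι → ι} (hf : ∀ a, 0 < P a (f a)) (a : ι) (n : ℕ) :
    0 < pathWeight P a (List.iterate f (f a) n) := by
  induction n generalizing a with
  | zero => exact one_pos
  | succ n ih => exact mul_pos (hf a) (ih (f a))

theorem sum_fin_succ_pathWeight_smul [Fintype ι] {E : Type*} [AddCommMonoid E] [Module ℝ≥0 E]
    (P : Matrix ι ι ℝ≥0) (g : List ι → E) (a : ι) (n : ℕ) :
    ∑ w : Fin (n + 1) → ι, pathWeight P a (List.ofFn w) • g (List.ofFn w) =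
      ∑ b, P a b • ∑ w : Fin n → ι, pathWeight P b (List.ofFn w) • g (b :: List.ofFn w) := by
  rw [← (Fin.consEquiv fun _ => ι).sum_comp, Fintype.sum_prod_type]
  simp [Fin.consEquiv, List.ofFn_succ, pathWeight, Finset.smul_sum, mul_smul]

theorem sum_pathWeight [Fintype ι] (hP : ∀ a, ∑ b, P a b = 1) (a : ι) (n : ℕ) :
    ∑ w : Fin n → ι, pathWeight P a (List.ofFn w) = 1 := by
  induction n generalizing a with
  | zero => simp [pathWeight]
  | succ n ih => simpa [ih, hP] using sum_fin_succ_pathWeight_smul P (1 : List ι → ℝ≥0) a n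

theorem pathWeight_ofFn_succ (P : Matrix ι ι ℝ≥0) {n : ℕ} (w : Fin (n + 1) → ι) :
    pathWeight P (w 0) (List.ofFn fun t : Fin n => w t.succ) =
      ∏ t : Fin n, P (w t.castSucc) (w t.succ) := by
  induction n with
  | zero => simp [pathWeight]
  | succ n ih =>
    rw [List.ofFn_succ, pathWeight, Fin.prod_univ_succ]
    exact congrArg _ (ih fun t => w t.succ)

theorem sum_prod_transition_smul [Fintype ι] {E : Type*} [AddCommMonoid E] [Module ℝ≥0 E]
    (p : ι → ℝ≥0) (P : Matrix ι ι ℝ≥0) (g : List ι → E) (n : ℕ) :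
    ∑ w : Fin (n + 1) → ι,
        (p (w 0) * ∏ t : Fin n, P (w t.castSucc) (w t.succ)) • g (List.ofFn w) =
      ∑ a, p a • ∑ w : Fin n → ι, pathWeight P a (List.ofFn w) • g (a :: List.ofFn w) := by
  simp only [← pathWeight_ofFn_succ]
  rw [← (Fin.consEquiv fun _ => ι).sum_comp, Fintype.sum_prod_type]
  simp only [Fin.consEquiv_apply, List.ofFn_succ, Fin.cons_zero, Fin.cons_succ,
    Finset.smul_sum, mul_smul]

end PathWeight

section Transfer

variable {ι 𝕜 V V' : Type*} [Fintype ι] [NormedField 𝕜] [AddCommGroup V] [Module 𝕜 V]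
  [AddCommGroup V'] [Module 𝕜 V']

/-- The transfer operator of the endomorphisms `T` driven by the Markov chain with transition
matrix `P`, acting on families of seminorms: the value at `(a, v)` is the expectation of
`q b (T b v)`, where `b` is the state that follows `a`. -/
def transfer (P : Matrix ι ι ℝ≥0) (T : ι → End 𝕜 V) :
    End ℝ≥0 (ι → Seminorm 𝕜 V) where
  toFun q a := ∑ b, P a b • (q b).comp (T b)
  map_add' q q' := by
    ext a v
    simp [Seminorm.comp_apply, ← Finset.sum_add_distrib, NNReal.smul_def]
  map_smul' c q := by
    ext a v
    simp [NNReal.smul_def, Finset.mul_sum, mul_left_comm]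

variable {P : Matrix ι ι ℝ≥0} {T : ι → End 𝕜 V}

theorem transfer_apply (P : Matrix ι ι ℝ≥0) (T : ι → End 𝕜 V) (q : ι → Seminorm 𝕜 V) (a : ι)
    (v : V) : transfer P T q a v = ∑ b, P a b * q b (T b v) := by
  simp [transfer, NNReal.smul_def]

theorem transfer_mono (P : Matrix ι ι ℝ≥0) (T : ι → End 𝕜 V) : Monotone (transfer P T) := by
  intro q q' h a v
  simp only [transfer_apply]
  gcongr with b
  exact h b (T b v)

theorem transfer_comp {T' : ι → End 𝕜 V'} {κ : V →ₗ[𝕜] V'} (h : ∀ b, κ ∘ₗ T b = T' b ∘ₗ κ)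
    (q : ι → Seminorm 𝕜 V') (a : ι) :
    transfer P T (fun b => (q b).comp κ) a = (transfer P T' q a).comp κ := by
  ext v
  simp only [transfer_apply, Seminorm.comp_apply, ← LinearMap.comp_apply, h]

theorem transfer_pow_le {r : ℝ≥0} {q : ι → Seminorm 𝕜 V} (h : transfer P T q ≤ r • q) (n : ℕ) :
    (transfer P T ^ n) q ≤ r ^ n • q := by
  induction n with
  | zero => simp
  | succ n ih =>
    calc (transfer P T ^ (n + 1)) q = transfer P T ((transfer P T ^ n) q) := by
          rw [pow_succ', End.mul_apply]
      _ ≤ transfer P T (r ^ n • q) := transfer_mono P T ih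
      _ = r ^ n • transfer P T q := map_smul _ _ _
      _ ≤ r ^ n • r • q := fun a v => mul_le_mul_of_nonneg_left (h a v) (r ^ n).2
      _ = r ^ (n + 1) • q := by rw [smul_smul, pow_succ]

theorem transfer_pow_const_apply (P : Matrix ι ι ℝ≥0) (T : ι → End 𝕜 V) (s : Seminorm 𝕜 V)
    (n : ℕ) (a : ι) (v : V) :
    (transfer P T ^ n) (fun _ => s) a v =
      ∑ w : Fin n → ι, pathWeight P a (List.ofFn w) * s (revProd T (List.ofFn w) v) := by
  induction n generalizing a v with
  | zero => simp [pathWeight]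
  | succ n ih =>
    rw [pow_succ', End.mul_apply, transfer_apply]
    simp only [ih]
    simpa [NNReal.smul_def] using
      (sum_fin_succ_pathWeight_smul P (fun l => s (revProd T l v)) a n).symm

theorem exists_transfer_pow_const_apply_le (hP : ∀ a, ∑ b, P a b = 1) {q : Seminorm 𝕜 V}
    (hq : ∀ b v, q (T b v) ≤ q v) {a : ι} {l : List ι} (hl : 0 < pathWeight P a l) {c : ℝ≥0}
    (hc : c < 1) (hcontr : ∀ v, q (revProd T l v) ≤ c * q v) :
    ∃ r : ℝ≥0, r < 1 ∧ ∀ v, (transfer P T ^ l.length) (fun _ => q) a v ≤ r * q v := by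
  classical
  let g : (Fin l.length → ι) → ℝ≥0 := fun w => if List.ofFn w = l then c else 1
  refine ⟨∑ w, pathWeight P a (List.ofFn w) * g w, ?_, fun v => ?_⟩
  · rw [← sum_pathWeight hP a l.length]
    refine Finset.sum_lt_sum (fun w _ => mul_le_of_le_one_right' ?_)
      ⟨l.get, Finset.mem_univ _, ?_⟩
    · dsimp only [g]
      split_ifs
      exacts [hc.le, le_rfl]
    · simpa [g] using mul_lt_of_lt_one_right hl hc
  · rw [transfer_pow_const_apply, NNReal.coe_sum, Finset.sum_mul]
    refine Finset.sum_le_sum fun w _ => ?_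
    rw [NNReal.coe_mul, mul_assoc]
    refine mul_le_mul_of_nonneg_left ?_ (NNReal.coe_nonneg _)
    dsimp only [g]
    split_ifs with h
    · rw [h]
      exact hcontr v
    · simpa using seminorm_revProd_apply_le hq _ v

end Transfer

section ContractsOnAverage

variable {ι 𝕜 V V₁ V₂ : Type*} [Fintype ι] [NormedField 𝕜] [AddCommGroup V] [Module 𝕜 V]
  [AddCommGroup V₁] [Module 𝕜 V₁] [AddCommGroup V₂] [Module 𝕜 V₂]
  {P : Matrix ι ι ℝ≥0} {T : ι → End 𝕜 V} {T₂ : ι → End 𝕜 V₂}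

/-- The endomorphisms `T`, driven by the Markov chain with transition matrix `P`, contract on
average with respect to state-dependent seminorms which may be taken to dominate any given ones. -/
def ContractsOnAverage (P : Matrix ι ι ℝ≥0) (T : ι → End 𝕜 V) : Prop :=
  ∀ s : ι → Seminorm 𝕜 V, ∃ r : ℝ≥0, r < 1 ∧ ∃ q, s ≤ q ∧ transfer P T q ≤ r • q

theorem map_sum_iterate_le {E : Type*} [AddCommMonoid E] [PartialOrder E] [AddLeftMono E]
    [Module ℝ≥0 E] (L : End ℝ≥0 E) {n : ℕ} {x : E} (h : (L ^ (n + 1)) x ≤ x) :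
    L (∑ j ∈ Finset.range (n + 1), (L ^ j) x) ≤ ∑ j ∈ Finset.range (n + 1), (L ^ j) x := by
  calc L (∑ j ∈ Finset.range (n + 1), (L ^ j) x)
      = ∑ j ∈ Finset.range n, (L ^ (j + 1)) x + (L ^ (n + 1)) x := by
        rw [map_sum, Finset.sum_range_succ]
        simp only [← End.mul_apply, ← pow_succ']
    _ ≤ ∑ j ∈ Finset.range n, (L ^ (j + 1)) x + x := by gcongr
    _ = ∑ j ∈ Finset.range (n + 1), (L ^ j) x := by
        rw [Finset.sum_range_succ', pow_zero, End.one_apply]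

/-- Rescaling `transfer P T` to `ρ⁻¹ • transfer P T` with `r ≤ ρ ^ (n + 1)` and `ρ < 1` makes the
sum of the first iterates of `q` a supersolution. -/
theorem exists_transfer_le_of_transfer_pow_le {n : ℕ} {r : ℝ≥0} (hr : r < 1)
    {q : ι → Seminorm 𝕜 V} (h : (transfer P T ^ (n + 1)) q ≤ r • q) :
    ∃ ρ : ℝ≥0, ρ < 1 ∧ ∃ q', q ≤ q' ∧ transfer P T q' ≤ ρ • q' := by
  obtain ⟨ρ, hρ0, hrρ, hρ1⟩ : ∃ ρ : ℝ≥0, 0 < ρ ∧ r < ρ ^ (n + 1) ∧ ρ < 1 := by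
    obtain ⟨ρ, h0, hr, h1⟩ := exists_pow_btwn n.succ_ne_zero (NNReal.coe_lt_one.2 hr) one_pos
    exact ⟨⟨ρ, h0.le⟩, h0, hr, (pow_lt_one_iff_of_nonneg h0.le n.succ_ne_zero).1 h1⟩
  let L := ρ⁻¹ • transfer P T
  have hL : (L ^ (n + 1)) q ≤ q := fun a v => by
    calc (L ^ (n + 1)) q a v = (ρ ^ (n + 1))⁻¹ * (transfer P T ^ (n + 1)) q a v := by
          simp only [L, smul_pow, inv_pow]
          rfl
      _ ≤ (ρ ^ (n + 1))⁻¹ * (ρ ^ (n + 1) * q a v) := by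
          gcongr
          refine (h a v).trans ?_
          exact mul_le_mul_of_nonneg_right (by exact_mod_cast hrρ.le) (apply_nonneg _ _)
      _ = q a v := inv_mul_cancel_left₀ (by positivity) _
  set q' := ∑ j ∈ Finset.range (n + 1), (L ^ j) q
  refine ⟨ρ, hρ1, q', ?_, ?_⟩
  · exact Finset.single_le_sum (f := fun j => (L ^ j) q)
      (fun j _ a v => apply_nonneg ((L ^ j) q a) v) (Finset.mem_range.2 n.succ_pos)
  · calc transfer P T q' = ρ • L q' := by simp [L, smul_smul, hρ0.ne']
      _ ≤ ρ • q' := fun a v =>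
        mul_le_mul_of_nonneg_left (map_sum_iterate_le L hL a v) ρ.2

theorem exists_transfer_le_of_triangular {s q₁ q₂ : ι → Seminorm 𝕜 V} {r₁ r₂ : ℝ≥0} (hr₁ : r₁ < 1)
    (hr₂ : r₂ < 1) (hs : s ≤ q₁ + q₂) (h₁ : transfer P T q₁ ≤ r₁ • q₁ + q₂)
    (h₂ : transfer P T q₂ ≤ r₂ • q₂) :
    ∃ r : ℝ≥0, r < 1 ∧ ∃ q, s ≤ q ∧ transfer P T q ≤ r • q := by
  obtain ⟨r, hr, hr1⟩ := exists_between (max_lt hr₁ hr₂)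
  obtain ⟨hr₁r, hr₂r⟩ := max_lt_iff.1 hr
  obtain ⟨M, hM1, hM⟩ : ∃ M : ℝ≥0, 1 ≤ M ∧ 1 + M * r₂ = r * M := by
    obtain ⟨δ, hδ, rfl⟩ := exists_pos_add_of_lt' hr₂r
    refine ⟨δ⁻¹, (one_le_inv₀ hδ).2 (le_of_add_le_right hr1.le), ?_⟩
    field_simp
    ring
  refine ⟨r, hr1, q₁ + M • q₂, fun a v => ?_, fun a v => ?_⟩
  · refine (hs a v).trans (add_le_add_right ?_ _)
    exact le_mul_of_one_le_left (apply_nonneg _ _) hM1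
  · calc transfer P T (q₁ + M • q₂) a v = transfer P T q₁ a v + M * transfer P T q₂ a v := by
          rw [map_add, map_smul]; rfl
      _ ≤ (r₁ * q₁ a v + q₂ a v) + M * (r₂ * q₂ a v) := by
          gcongr
          exacts [h₁ a v, h₂ a v]
      _ = r₁ * q₁ a v + (1 + M * r₂ : ℝ≥0) * q₂ a v := by push_cast; ring
      _ ≤ r * q₁ a v + (r * M : ℝ≥0) * q₂ a v := by rw [hM]; gcongr
      _ = (r • (q₁ + M • q₂)) a v := by
          push_cast
          rw [mul_assoc, ← mul_add]
          rfl

theorem ContractsOnAverage.of_extension {i : V₁ →ₗ[𝕜] V} {π : V →ₗ[𝕜] V₁} {κ : V →ₗ[𝕜] V₂}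
    {σ : V₂ →ₗ[𝕜] V} (hsplit : ∀ v, i (π v) + σ (κ v) = v) (hκ : ∀ b, κ ∘ₗ T b = T₂ b ∘ₗ κ)
    (h₁ : ContractsOnAverage P fun b => π ∘ₗ T b ∘ₗ i) (h₂ : ContractsOnAverage P T₂) :
    ContractsOnAverage P T := by
  intro s
  have hle (q : Seminorm 𝕜 V) (v : V) : q v ≤ q (i (π v)) + q (σ (κ v)) := by
    simpa only [hsplit] using map_add_le_add q (i (π v)) (σ (κ v))
  obtain ⟨r₁, hr₁, q₁, hsq₁, hq₁⟩ := h₁ fun a => (s a).comp i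
  set Q₁ : ι → Seminorm 𝕜 V := fun a => (q₁ a).comp π
  obtain ⟨r₂, hr₂, q₂, hsq₂, hq₂⟩ := h₂ fun a => (s a + transfer P T Q₁ a).comp σ
  set Q₂ : ι → Seminorm 𝕜 V := fun a => (q₂ a).comp κ
  refine exists_transfer_le_of_triangular (q₁ := Q₁) (q₂ := Q₂) hr₁ hr₂ (fun a v => ?_)
    (fun a v => ?_) fun a v => ?_
  · refine (hle (s a) v).trans (add_le_add (hsq₁ a (π v)) (le_trans ?_ (hsq₂ a (κ v))))
    exact le_add_of_nonneg_right (apply_nonneg (transfer P T Q₁ a) _)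
  · have hdiag : transfer P T Q₁ a (i (π v)) = transfer P (fun b => π ∘ₗ T b ∘ₗ i) q₁ a (π v) := by
      simp [transfer_apply, Q₁]
    refine (hle (transfer P T Q₁ a) v).trans (add_le_add ?_ (le_trans ?_ (hsq₂ a (κ v))))
    · exact hdiag.trans_le (hq₁ a (π v))
    · exact le_add_of_nonneg_left (apply_nonneg (s a) _)
  · rw [transfer_comp hκ]
    exact hq₂ a (κ v)

theorem ContractsOnAverage.exists_sum_pathWeight_mul_le (h : ContractsOnAverage P T)
    (s : Seminorm 𝕜 V) :
    ∃ r : ℝ≥0, r < 1 ∧ ∃ q : ι → Seminorm 𝕜 V, ∀ n a v,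
      ∑ w : Fin n → ι, pathWeight P a (List.ofFn w) * s (revProd T (List.ofFn w) v) ≤
        r ^ n * q a v := by
  obtain ⟨r, hr, q, hsq, hq⟩ := h fun _ => s
  refine ⟨r, hr, q, fun n a v => ?_⟩
  rw [← transfer_pow_const_apply]
  have hmono : Monotone ⇑(transfer P T ^ n) := by
    rw [End.coe_pow]
    exact (transfer_mono P T).iterate n
  exact (hmono hsq a v).trans (transfer_pow_le hq n a v)

end ContractsOnAverage

section PeriodicallyStableContractsOnAverage

variable {ι V : Type*} [Fintype ι] [AddCommGroup V] [Module ℂ V] [FiniteDimensional ℂ V]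
  {P : Matrix ι ι ℝ≥0} {T : ι → End ℂ V}

theorem PeriodicallyStable.exists_transfer_pow_const_le (hT : PeriodicallyStable T)
    (hP : ∀ a, ∑ b, P a b = 1) {q : Seminorm ℂ V} (hdef : ∀ v, q v = 0 → v = 0)
    (hq : ∀ b v, q (T b v) ≤ q v) :
    ∃ n, ∃ r : ℝ≥0, r < 1 ∧ (transfer P T ^ (n + 1)) (fun _ => q) ≤ r • fun _ => q := by
  have hsucc (a) : ∃ b, 0 < P a b := by
    by_contra! h
    simpa [le_zero_iff.1 (h _)] using hP a
  choose f hf using hsucc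
  have hlarge := Filter.eventually_all.2 fun a =>
    hT.eventually_seminorm_revProd_iterate_le hdef hq f (f a) (c := (2⁻¹ : ℝ≥0)) (by simp)
  obtain ⟨n, hn⟩ := ((tendsto_add_atTop_nat 1).eventually hlarge).exists
  have hcontr (a) : ∃ r : ℝ≥0, r < 1 ∧
      ∀ v, (transfer P T ^ (n + 1)) (fun _ => q) a v ≤ r * q v := by
    simpa using exists_transfer_pow_const_apply_le hP hq (pathWeight_iterate_pos hf a (n + 1))
      (c := 2⁻¹) (inv_lt_one_of_one_lt₀ one_lt_two) (hn a)
  choose r hr1 hr using hcontr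
  refine ⟨n, Finset.univ.sup r, (Finset.sup_lt_iff one_pos).2 fun a _ => hr1 a, fun a v => ?_⟩
  refine (hr a v).trans (mul_le_mul_of_nonneg_right ?_ (apply_nonneg q v))
  exact_mod_cast Finset.le_sup (Finset.mem_univ a)

theorem PeriodicallyStable.contractsOnAverage_of_isSimpleModule (hT : PeriodicallyStable T)
    [IsSimpleModule (Algebra.adjoin ℂ (Set.range T)) V] (hP : ∀ a, ∑ b, P a b = 1) :
    ContractsOnAverage P T := by
  intro s
  obtain ⟨s', hss', hs'⟩ := exists_definite_seminorm_ge (∑ a, s a)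
  obtain ⟨q, hs'q, hq⟩ := hT.exists_nonexpansive_seminorm s'
  have hdef (v) (hv : q v = 0) : v = 0 := hs' v ((hv ▸ hs'q v).antisymm (apply_nonneg s' v))
  have hsq : s ≤ fun _ => q := fun a =>
    (Finset.single_le_sum (fun b _ v => apply_nonneg (s b) v) (Finset.mem_univ a)).trans
      (hss'.trans hs'q)
  obtain ⟨n, r, hr, hle⟩ := hT.exists_transfer_pow_const_le hP hdef hq
  obtain ⟨ρ, hρ, q', hqq', hq'⟩ := exists_transfer_le_of_transfer_pow_le hr hle
  exact ⟨ρ, hρ, q', hsq.trans hqq', hq'⟩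

theorem exists_retraction_section_mkQ {k E : Type*} [Field k] [AddCommGroup E] [Module k E]
    (W : Submodule k E) :
    ∃ (π : E →ₗ[k] W) (σ : E ⧸ W →ₗ[k] E), ∀ v, W.subtype (π v) + σ (W.mkQ v) = v := by
  obtain ⟨σ, hσ⟩ := W.mkQ.exists_rightInverse_of_surjective W.range_mkQ
  have hmem (v) : v - σ (W.mkQ v) ∈ W := by
    have hmkQ : W.mkQ (v - σ (W.mkQ v)) = 0 := by
      rw [map_sub, ← LinearMap.comp_apply W.mkQ σ, hσ, LinearMap.id_apply, sub_self]
    exact (Submodule.Quotient.mk_eq_zero W).1 hmkQ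
  exact ⟨(LinearMap.id - σ ∘ₗ W.mkQ).codRestrict W hmem, σ, fun v => sub_add_cancel _ _⟩

theorem PeriodicallyStable.contractsOnAverage (hT : PeriodicallyStable T)
    (hP : ∀ a, ∑ b, P a b = 1) : ContractsOnAverage P T := by
  induction hn : finrank ℂ V using Nat.strong_induction_on generalizing V with
  | _ n ih =>
    subst hn
    cases subsingleton_or_nontrivial V with
    | inl _ =>
      refine fun s => ⟨0, one_pos, s, le_rfl, fun a v => ?_⟩
      simp [Subsingleton.elim v 0]
    | inr _ =>
      by_cases hirr : ∀ W : Submodule ℂ V, (∀ b, W ≤ W.comap (T b)) → W = ⊥ ∨ W = ⊤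
      · have := isSimpleModule_adjoin (s := Set.range T) fun W hW => hirr W fun b => hW _ ⟨b, rfl⟩
        exact hT.contractsOnAverage_of_isSimpleModule hP
      · push Not at hirr
        obtain ⟨W, hW, hbot, htop⟩ := hirr
        obtain ⟨π, σ, hsplit⟩ := exists_retraction_section_mkQ W
        have hsub (b) : W.subtype ∘ₗ π ∘ₗ T b ∘ₗ W.subtype = T b ∘ₗ W.subtype := by
          ext w
          have hw : W.mkQ (T b w) = 0 := (Submodule.Quotient.mk_eq_zero W).2 (hW b w.2)
          simpa [hw] using hsplit (T b w)
        have hquot (b) : W.mkQ ∘ₗ T b = W.mapQ W (T b) (hW b) ∘ₗ W.mkQ :=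
          (W.mapQ_mkQ W (T b)).symm
        have hrank := W.finrank_quotient_add_finrank
        have hWpos := Submodule.one_le_finrank_iff.2 hbot
        refine .of_extension hsplit hquot ?_ ?_
        · exact ih _ (Submodule.finrank_lt htop) (hT.of_injective hsub W.injective_subtype) rfl
        · exact ih _ (by lia) (hT.of_surjective hquot W.mkQ_surjective) rfl

end PeriodicallyStableContractsOnAverage

theorem ae_eventually_lt_of_lintegral_le {Ω : Type*} [MeasurableSpace Ω] {μ : Measure Ω}
    {f : ℕ → Ω → ℝ≥0∞} (hf : ∀ n, AEMeasurable (f n) μ) {C D r x : ℝ≥0}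
    (hint : ∀ n, ∫⁻ ω, f n ω ∂μ ≤ C * r ^ n) (hrx : r < x) (hD : D ≠ 0) :
    ∀ᵐ ω ∂μ, ∀ᶠ n in atTop, f n ω < D * x ^ n := by
  have hx : x ≠ 0 := hrx.ne_bot
  have hmarkov (n) :
      μ {ω | D * x ^ n ≤ f n ω} ≤ ((C / D : ℝ≥0) : ℝ≥0∞) * ((r / x : ℝ≥0) : ℝ≥0∞) ^ n := by
    refine (meas_ge_le_lintegral_div (hf n) ?_ ?_).trans ?_
    · exact_mod_cast mul_ne_zero hD (pow_ne_zero n hx)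
    · exact_mod_cast ENNReal.coe_ne_top
    · refine ENNReal.div_le_of_le_mul ((hint n).trans_eq ?_)
      norm_cast
      rw [div_pow]
      field_simp
  have hsum : ∑' n, μ {ω | D * x ^ n ≤ f n ω} ≠ ∞ := by
    refine ne_top_of_le_ne_top ?_ (ENNReal.tsum_le_tsum hmarkov)
    rw [ENNReal.tsum_mul_left, ENNReal.tsum_geometric]
    refine ENNReal.mul_ne_top ENNReal.coe_ne_top (ENNReal.inv_ne_top.2 (tsub_pos_of_lt ?_).ne')
    exact_mod_cast (div_lt_one (pos_of_ne_zero hx)).2 hrx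
  filter_upwards [ae_eventually_notMem hsum] with ω hω
  exact hω.mono fun n hn => not_le.1 hn

theorem revProd_mulRight_apply {ι R A : Type*} [CommSemiring R] [Semiring A] [Algebra R A]
    (S : ι → A) (l : List ι) (X : A) :
    revProd (fun k => LinearMap.mulRight R (S k)) l X = X * (l.map S).prod := by
  induction l generalizing X with
  | nil => simp
  | cons b l ih => simp [ih, mul_assoc]

section MatrixProducts

variable {d K : ℕ} {S : Fin K → Matrix (Fin d) (Fin d) ℂ}

section

attribute [local instance] Matrix.linftyOpNormedRing Matrix.linftyOpNormedAlgebra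

theorem norm_le_specRad {A : Matrix (Fin d) (Fin d) ℂ} {z : ℂ} (hz : z ∈ spectrum ℂ A) :
    ‖z‖ ≤ specRad A := by
  obtain ⟨z', -, hz'⟩ := spectrum.exists_nnnorm_eq_spectralRadius_of_nonempty ⟨z, hz⟩
  have hle : (‖z‖₊ : ℝ≥0∞) ≤ spectralRadius ℂ A := le_iSup₂ (α := ℝ≥0∞) z hz
  rw [← hz'] at hle
  rw [specRad, ← hz']
  exact_mod_cast hle

end

theorem prod_map_ofFn (S : Fin K → Matrix (Fin d) (Fin d) ℂ) {n : ℕ} (w : Fin n → Fin K) :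
    ((List.ofFn w).map S).prod = finWordProd S w := by
  rw [List.map_ofFn]
  rfl

theorem periodicallyStable_mulRight
    (hstab : ∀ (n : ℕ), 1 ≤ n → ∀ w : Fin n → Fin K, specRad (finWordProd S w) < 1) :
    PeriodicallyStable fun k => LinearMap.mulRight ℂ (S k) := by
  intro l hl z hz
  have hA : (l.map S).prod = finWordProd S l.get := by rw [← prod_map_ofFn, List.ofFn_get]
  obtain ⟨X, hX⟩ := hz.exists_hasEigenvector
  have hXA : X * finWordProd S l.get = z • X := by
    rw [← hA, ← revProd_mulRight_apply (R := ℂ)]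
    exact hX.apply_eq_smul
  refine lt_of_le_of_lt (norm_le_specRad fun hu => hX.2 (hu.mul_left_eq_zero.1 ?_))
    (hstab l.length (List.length_pos_iff.2 hl) l.get)
  rw [mul_sub, hXA, Algebra.algebraMap_eq_smul_one, mul_smul_comm, mul_one, sub_self]

theorem measurable_prefix (n : ℕ) : Measurable fun (i : ℕ → Fin K) (t : Fin n) => i t := by
  fun_prop

theorem lintegral_prefix (μ : Measure (ℕ → Fin K)) {n : ℕ} (f : (Fin n → Fin K) → ℝ≥0∞) :
    ∫⁻ i, f (fun t => i t) ∂μ = ∑ w, f w * μ (cyl w) := by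
  rw [← lintegral_map (f := f) (measurable_of_finite f) (measurable_prefix n), lintegral_fintype]
  refine Finset.sum_congr rfl fun w _ => ?_
  rw [Measure.map_apply (measurable_prefix n) (measurableSet_singleton w)]
  congr 2
  ext i
  exact funext_iff

variable {μ : Measure (ℕ → Fin K)} {p : Fin K → ℝ≥0} {P : Matrix (Fin K) (Fin K) ℝ≥0}
  {s : Seminorm ℂ (Matrix (Fin d) (Fin d) ℂ)}

theorem lintegral_wordProd
    (hcyl : ∀ (n : ℕ) (w : Fin (n + 1) → Fin K),
      μ (cyl w) = (p (w 0) * ∏ t : Fin n, P (w t.castSucc) (w t.succ) : ℝ≥0))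
    (f : Matrix (Fin d) (Fin d) ℂ → ℝ≥0∞) (n : ℕ) :
    ∫⁻ i, f (wordProd S i (n + 1)) ∂μ =
      ∑ a, p a • ∑ w : Fin n → Fin K, pathWeight P a (List.ofFn w) • f (S a * finWordProd S w) := by
  calc ∫⁻ i, f (wordProd S i (n + 1)) ∂μ
      = ∑ w : Fin (n + 1) → Fin K, f (finWordProd S w) * μ (cyl w) :=
        lintegral_prefix μ fun w => f (finWordProd S w)
    _ = ∑ w : Fin (n + 1) → Fin K, (p (w 0) * ∏ t : Fin n, P (w t.castSucc) (w t.succ)) •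
          f ((List.ofFn w).map S).prod := by
        simp only [hcyl, prod_map_ofFn, ENNReal.smul_def, smul_eq_mul, mul_comm]
    _ = ∑ a, p a • ∑ w : Fin n → Fin K,
          pathWeight P a (List.ofFn w) • f ((a :: List.ofFn w).map S).prod :=
        sum_prod_transition_smul p P (fun l => f (l.map S).prod) n
    _ = _ := by
        simp only [List.map_cons, List.prod_cons, prod_map_ofFn]

theorem lintegral_seminorm_wordProd_le
    (hcyl : ∀ (n : ℕ) (w : Fin (n + 1) → Fin K),
      μ (cyl w) = (p (w 0) * ∏ t : Fin n, P (w t.castSucc) (w t.succ) : ℝ≥0))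
    {n : ℕ} {c : Fin K → ℝ≥0}
    (hc : ∀ a, ∑ w : Fin n → Fin K,
      pathWeight P a (List.ofFn w) * s (S a * finWordProd S w) ≤ c a) :
    ∫⁻ i, ENNReal.ofReal (s (wordProd S i (n + 1))) ∂μ ≤ (∑ a, p a * c a : ℝ≥0) := by
  have hc' (a) : ∑ w : Fin n → Fin K, pathWeight P a (List.ofFn w) •
      ENNReal.ofReal (s (S a * finWordProd S w)) ≤ c a := by
    simp only [ENNReal.smul_def, smul_eq_mul, ← ENNReal.ofReal_coe_nnreal,
      ← ENNReal.ofReal_mul (NNReal.coe_nonneg _)]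
    rw [← ENNReal.ofReal_sum_of_nonneg fun w _ =>
      mul_nonneg (NNReal.coe_nonneg _) (apply_nonneg s _)]
    exact ENNReal.ofReal_le_ofReal (hc a)
  rw [lintegral_wordProd hcyl fun A => ENNReal.ofReal (s A)]
  push_cast
  gcongr with a
  rw [ENNReal.smul_def, smul_eq_mul]
  gcongr
  exact hc' a

theorem exists_ae_eventually_seminorm_wordProd_lt
    (hstab : ∀ (n : ℕ), 1 ≤ n → ∀ w : Fin n → Fin K, specRad (finWordProd S w) < 1)
    (hP : ∀ a, ∑ b, P a b = 1)
    (hcyl : ∀ (n : ℕ) (w : Fin (n + 1) → Fin K),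
      μ (cyl w) = (p (w 0) * ∏ t : Fin n, P (w t.castSucc) (w t.succ) : ℝ≥0)) :
    ∃ x : ℝ≥0, x < 1 ∧ ∀ᵐ i ∂μ, ∀ᶠ n in atTop, s (wordProd S i n) < x ^ n := by
  obtain ⟨r, hr1, q, hq⟩ :=
    ((periodicallyStable_mulRight hstab).contractsOnAverage hP).exists_sum_pathWeight_mul_le s
  obtain ⟨x, hrx, hx1⟩ := exists_between hr1
  have hint (n) : ∫⁻ i, ENNReal.ofReal (s (wordProd S i (n + 1))) ∂μ ≤
      (∑ a, p a * (q a (S a)).toNNReal : ℝ≥0) * r ^ n := by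
    have hc (a) : ∑ w : Fin n → Fin K, pathWeight P a (List.ofFn w) * s (S a * finWordProd S w) ≤
        ((q a (S a)).toNNReal * r ^ n : ℝ≥0) := by
      have h := hq n a (S a)
      simp only [revProd_mulRight_apply, prod_map_ofFn] at h
      simpa [mul_comm] using h
    simpa [Finset.sum_mul, mul_assoc] using lintegral_seminorm_wordProd_le hcyl hc
  have hmeas (n) : AEMeasurable (fun i => ENNReal.ofReal (s (wordProd S i (n + 1)))) μ :=
    ((measurable_of_finite fun w => ENNReal.ofReal (s (finWordProd S w))).comp
      (measurable_prefix (n + 1))).aemeasurable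
  refine ⟨x, hx1, ?_⟩
  filter_upwards [ae_eventually_lt_of_lintegral_le hmeas hint hrx hrx.ne_bot] with i hi
  rw [← map_add_atTop_eq_nat 1, eventually_map]
  filter_upwards [hi] with n hn
  rw [← pow_succ', ← ENNReal.coe_pow, ← ENNReal.ofReal_coe_nnreal] at hn
  exact_mod_cast (ENNReal.ofReal_lt_ofReal_iff_of_nonneg (apply_nonneg s _)).1 hn

end MatrixProducts

/-- A matrix norm, viewed as a seminorm on the complex vector space of `d × d` matrices. -/
def MatrixNorm.toSeminorm {d : ℕ} (ν : MatrixNorm d) : Seminorm ℂ (Matrix (Fin d) (Fin d) ℂ) :=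
  Seminorm.of ν.N ν.triangle ν.homog

theorem spectral_radius_lt_one_of_periodically_stable_and_extremal_markov_general
    {d K : ℕ} (S : Fin K → Matrix (Fin d) (Fin d) ℂ) (s : Seminorm ℂ (Matrix (Fin d) (Fin d) ℂ))
    (hstab : ∀ (n : ℕ), 1 ≤ n → ∀ w : Fin n → Fin K, specRad (finWordProd S w) < 1)
    (Pm : Matrix (Fin K) (Fin K) ℝ) (hPnn : ∀ a b, 0 ≤ Pm a b) (hProw : ∀ a, ∑ b, Pm a b = 1)
    (p : Fin K → ℝ) (hp : ∀ k, 0 ≤ p k) (μ : Measure (ℕ → Fin K)) [NeZero μ]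
    (hcyl : ∀ (n : ℕ) (w : Fin (n + 1) → Fin K),
      μ (cyl w) = ENNReal.ofReal (p (w 0) * ∏ t : Fin n, Pm (w t.castSucc) (w t.succ)))
    (hext : IsExtremal S s μ) :
    genSpecRad S < 1 := by
  lift p to Fin K → ℝ≥0 using hp
  obtain ⟨P, rfl⟩ : ∃ P : Matrix (Fin K) (Fin K) ℝ≥0, P.map NNReal.toReal = Pm :=
    ⟨fun a b => ⟨Pm a b, hPnn a b⟩, rfl⟩
  have hP (a) : ∑ b, P a b = 1 :=
    NNReal.coe_injective (by simpa using hProw a)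
  have hcyl' (n : ℕ) (w : Fin (n + 1) → Fin K) :
      μ (cyl w) = (p (w 0) * ∏ t : Fin n, P (w t.castSucc) (w t.succ) : ℝ≥0) := by
    rw [hcyl, ← ENNReal.ofReal_coe_nnreal]
    simp only [Matrix.map_apply, NNReal.coe_mul, NNReal.coe_prod]
  obtain ⟨x, hx1, hx⟩ := exists_ae_eventually_seminorm_wordProd_lt (s := s) hstab hP hcyl'
  obtain ⟨i, hi, hlim⟩ := (hx.and hext).exists
  refine (le_of_tendsto hlim ?_).trans_lt (NNReal.coe_lt_one.2 hx1)
  filter_upwards [hi, eventually_ne_atTop 0] with n hn hn0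
  exact (Real.rpow_inv_le_iff_of_pos (apply_nonneg s _) x.2 (by positivity)).2
    (by exact_mod_cast hn.le)

/-- If `S` is periodically switched stable and the canonical `(p, P)`-Markov measure of an
irreducible stochastic matrix `P` with positive stationary distribution `p` is extremal
for `S`, then `ρ(S) < 1`. -/
theorem spectral_radius_lt_one_of_periodically_stable_and_extremal_markov
    {d K : ℕ} (hd : 2 ≤ d) (hK : 2 ≤ K)
    (S : Fin K → Matrix (Fin d) (Fin d) ℂ) (ν : MatrixNorm d)
    (hstab : ∀ (n : ℕ), 1 ≤ n → ∀ w : Fin n → Fin K, specRad (finWordProd S w) < 1)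
    (Pm : Matrix (Fin K) (Fin K) ℝ)
    (hPnn : ∀ a b, 0 ≤ Pm a b)
    (hProw : ∀ a, ∑ b, Pm a b = 1)
    (hPirr : ∀ a b, ∃ n : ℕ, 1 ≤ n ∧ 0 < (Pm ^ n) a b)
    (p : Fin K → ℝ) (hppos : ∀ k, 0 < p k) (hpsum : ∑ k, p k = 1)
    (hstat : ∀ b, ∑ a, p a * Pm a b = p b)
    (μ : Measure (ℕ → Fin K)) [IsProbabilityMeasure μ]
    (hcyl : ∀ (n : ℕ) (w : Fin (n + 1) → Fin K),
      μ (cyl w) = ENNReal.ofReal (p (w 0) * ∏ t : Fin n, Pm (w t.castSucc) (w t.succ)))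
    (hext : IsExtremal S ν.N μ) :
    genSpecRad S < 1 := by
  exact spectral_radius_lt_one_of_periodically_stable_and_extremal_markov_general S ν.toSeminorm
    hstab Pm hPnn hProw p (fun k => (hppos k).le) μ hcyl hext
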